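/- Let D ⊆ ℂ be a symmetric open set, let (U_i)_{i ∈ ι} be a symmetric open covering of D, and let (n_{ijk})_{(i,j,k) ∈ ι³} be a family of integers which is alternating (it changes sign under any transposition of the indices), satisfies n_{ijk} = 0 whenever U_i ∩ U_j ∩ U_k ∩ ℝ ≠ ∅, and satisfies the cocycle identity n_{jkl} − n_{ikl} + n_{ijl} − n_{ijk} = 0 whenever U_i ∩ U_j ∩ U_k ∩ U_l ∩ ℂ⁺ ≠ ∅. Then there exist a symmetric open covering (V_a)_{a ∈ A} of D, a refinement map r : A → ι with V_a ⊆ U_{r(a)} for every a, and an alternating family of integers (m_{ab})_{(a,b) ∈ A²} with m_{ab} = 0 whenever V_a ∩ V_b ∩ ℝ ≠ ∅, such that n_{r(a) r(b) r(c)} = m_{bc} − m_{ac} + m_{ab} whenever V_a ∩ V_b ∩ V_c ∩ ℂ⁺ ≠ ∅. -/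

import Mathlib

open Set

namespace SimpleGraph

variable {P : Type*}

/-- The graph `G` with all edges at vertices of index less than `k` removed. -/
def cutBelow (G : SimpleGraph P) (idx : P → ℕ) (k : ℕ) : SimpleGraph P where
  Adj u v := G.Adj u v ∧ k ≤ idx u ∧ k ≤ idx v
  symm := ⟨fun _ _ h => ⟨h.1.symm, h.2.2, h.2.1⟩⟩
  loopless := ⟨fun _ h => h.1.ne rfl⟩

theorem cutBelow_anti (G : SimpleGraph P) (idx : P → ℕ) {j k : ℕ} (h : j ≤ k) :
    G.cutBelow idx k ≤ G.cutBelow idx j :=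
  fun _ _ huv => ⟨huv.1, h.trans huv.2.1, h.trans huv.2.2⟩

theorem reachable_cutBelow_succ {G : SimpleGraph P} {idx : P → ℕ} (hidx : idx.Injective)
    {k : ℕ} {w q : P} (hw : idx w = k) (h : (G.cutBelow idx k).Reachable w q) :
    q = w ∨ ∃ u ∈ G.neighborSet w, (G.cutBelow idx (k + 1)).Reachable u q := by
  rw [reachable_iff_reflTransGen] at h
  induction h with
  | refl => exact Or.inl rfl
  | @tail x y _ hxy ih =>
    by_cases hy : y = w
    · exact Or.inl hy
    right
    by_cases hx : x = w
    · subst hx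
      exact ⟨y, hxy.1, Reachable.refl _⟩
    obtain ⟨u, hu, hux⟩ := ih.resolve_left hx
    have key : ∀ z, z ≠ w → k ≤ idx z → k + 1 ≤ idx z := fun z hz hk =>
      Nat.succ_le_of_lt (lt_of_le_of_ne hk fun h => hz (hidx (h ▸ hw.symm)))
    exact ⟨u, hu, hux.trans
      (Adj.reachable ⟨hxy.1, key x hx hxy.2.1, key y hy hxy.2.2⟩)⟩

theorem exists_reachable_idx_eq {G : SimpleGraph P} {idx : P → ℕ} {k : ℕ} {p : P}
    (hfin : {q | (G.cutBelow idx (k + 1)).Reachable p q}.Finite)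
    (hinf : {q | (G.cutBelow idx k).Reachable p q}.Infinite) :
    ∃ w, idx w = k ∧ (G.cutBelow idx k).Reachable p w := by
  by_contra! hno
  refine hinf (hfin.subset fun q hq => ?_)
  have hq' := hq
  simp only [mem_ofPred_eq] at hq ⊢
  rw [reachable_iff_reflTransGen] at hq
  induction hq with
  | refl => exact Reachable.refl _
  | @tail x y hpx hxy ih =>
    rw [← reachable_iff_reflTransGen] at hpx
    have key : ∀ z, (G.cutBelow idx k).Reachable p z → k ≤ idx z → k + 1 ≤ idx z := fun z hz hk =>
      Nat.succ_le_of_lt (lt_of_le_of_ne hk fun h => hno z h.symm hz)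
    exact (ih hpx).trans (Adj.reachable ⟨hxy.1, key x hpx hxy.2.1, key y hq' hxy.2.2⟩)

/-- A countable locally finite graph without finite components carries a well-founded rank such
that every vertex has a neighbour of larger rank. -/
theorem exists_rank_lt_adj [Countable P] (G : SimpleGraph P)
    (hloc : ∀ p, (G.neighborSet p).Finite) (hinf : ∀ p, {q | G.Reachable p q}.Infinite) :
    ∃ rank : P → ℕ ×ₗ ℕ, ∀ p, ∃ q, G.Adj p q ∧ rank p < rank q := by
  classical
  obtain ⟨idx, hidx⟩ := exists_injective_nat P
  let H := G.cutBelow idx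
  have hanti : ∀ {j k}, j ≤ k → H k ≤ H j := fun h => G.cutBelow_anti idx h
  have hbad : ∀ p, ∃ k, {q | (H (k + 1)).Reachable p q}.Finite := fun p => by
    refine ⟨idx p, (finite_singleton p).subset fun q hq => ?_⟩
    simp only [mem_ofPred_eq] at hq
    rw [reachable_iff_reflTransGen] at hq
    induction hq with
    | refl => rfl
    | @tail x y _ hxy ih =>
      have : x = p := ih
      subst this
      exact absurd hxy.2.1 (by omega)
  let κ : P → ℕ := fun p => Nat.find (hbad p)
  have hκfin : ∀ p, {q | (H (κ p + 1)).Reachable p q}.Finite := fun p => Nat.find_spec (hbad p)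
  have hκinf : ∀ p, {q | (H (κ p)).Reachable p q}.Infinite := fun p => by
    rcases h : κ p with _ | k
    · refine (hinf p).mono fun q hq => ?_
      exact Reachable.mono (fun u v huv => ⟨huv, Nat.zero_le _, Nat.zero_le _⟩) hq
    · exact Nat.find_min (hbad p) (show k < κ p by omega)
  have hle : ∀ {k p}, {q | (H k).Reachable p q}.Infinite → k ≤ κ p := fun {k p} h => by
    by_contra! hlt
    exact h ((hκfin p).subset fun q hq => Reachable.mono (hanti (Nat.succ_le_of_lt hlt)) hq)
  have hreach : ∀ {k p u}, {q | (H k).Reachable p q}.Infinite → (H k).Reachable p u →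
      {q | (H k).Reachable u q}.Infinite := fun h hu =>
    h.mono fun q hq => hu.symm.trans hq
  choose w hwidx hwreach using fun p => exists_reachable_idx_eq (hκfin p) (hκinf p)
  have hweq : ∀ {p q}, κ p = κ q → w p = w q := fun h => hidx (by rw [hwidx, hwidx, h])
  let d : P → ℕ := fun p => (H (κ p)).dist p (w p)
  have hlevel : ∀ k, {p | κ p = k}.Finite := fun k => by
    rcases {p | κ p = k}.eq_empty_or_nonempty with h | ⟨p₀, hp₀⟩
    · simp [h]
    simp only [mem_ofPred_eq] at hp₀
    subst hp₀
    let N := {u ∈ G.neighborSet (w p₀) | {q | (H (κ p₀ + 1)).Reachable u q}.Finite}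
    have hN : (⋃ u ∈ N, {q | (H (κ p₀ + 1)).Reachable u q}).Finite :=
      ((hloc _).subset (sep_subset _ _)).biUnion fun u hu => hu.2
    refine (hN.insert (w p₀)).subset fun p hp => ?_
    simp only [mem_ofPred_eq] at hp
    have h1 := (hwreach p).symm
    rw [hp, hweq hp] at h1
    rcases reachable_cutBelow_succ hidx (hwidx p₀) h1 with h | ⟨u, hu, hup⟩
    · exact Or.inl h
    · refine Or.inr (mem_biUnion (x := u) ⟨hu, ?_⟩ hup)
      have := hκfin p
      rw [hp] at this
      exact this.subset fun q hq => hup.symm.trans hq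
  choose B hB using fun k => ((hlevel k).image d).bddAbove
  have hdB : ∀ p, d p ≤ B (κ p) := fun p => hB _ ⟨p, rfl, rfl⟩
  refine ⟨fun p => toLex (κ p, B (κ p) - d p), fun p => ?_⟩
  by_cases hpw : p = w p
  · have hex : ∃ u ∈ G.neighborSet p, {q | (H (κ p + 1)).Reachable u q}.Infinite := by
      by_contra! hno
      refine hκinf p ((((hloc p).biUnion fun u hu =>
        hno u hu).insert p).subset fun q hq => ?_)
      have hp : idx p = κ p := by rw [← hwidx p, ← hpw]
      rcases reachable_cutBelow_succ hidx hp hq with h | ⟨u, hu, huq⟩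
      · exact Or.inl h
      · exact Or.inr (mem_biUnion hu huq)
    obtain ⟨u, hu, huinf⟩ := hex
    exact ⟨u, hu, Prod.Lex.toLex_lt_toLex.2 (Or.inl (hle huinf))⟩
  · obtain ⟨W, hW⟩ := (hwreach p).exists_walk_length_eq_dist
    have hcons : ∀ {x y} (W : (H (κ p)).Walk x y), x ≠ y →
        ∃ u, (H (κ p)).Adj x u ∧ ∃ W' : (H (κ p)).Walk u y, W.length = W'.length + 1 := by
      intro x y W hxy
      cases W with
      | nil => exact absurd rfl hxy
      | cons h W' => exact ⟨_, h, W', rfl⟩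
    obtain ⟨u, hadj, W', hlen⟩ := hcons W hpw
    refine ⟨u, hadj.1, Prod.Lex.toLex_lt_toLex.2 ?_⟩
    have hku : κ p ≤ κ u := hle (hreach (hκinf p) (Adj.reachable hadj))
    rcases hku.lt_or_eq with h | h
    · exact Or.inl h
    · refine Or.inr ⟨h, ?_⟩
      have h1 : d u ≤ W'.length := by
        simp only [d, ← h, ← hweq h]
        exact dist_le W'
      have h2 : d p = W'.length + 1 := by
        rw [← hlen, hW]
      have h3 := hdB p
      simp only [← h]
      omega

end SimpleGraph

/-- Triangular elimination: a system of integer linear equations is solvable if every equation has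
a pivot variable with unit coefficient which otherwise occurs only in equations of larger rank. -/
theorem exists_solution_of_pivot {P E R : Type*} [LinearOrder R] [WellFoundedLT R]
    (rank : P → R) (inc : P → E →₀ ℤ) (e : P → E) (hunit : ∀ p, IsUnit (inc p (e p)))
    (hlater : ∀ p q, q ≠ p → inc q (e p) ≠ 0 → rank p < rank q) (c : P → ℤ) :
    ∃ w : E → ℤ, (∀ p, Finsupp.linearCombination ℤ w (inc p) = c p) ∧
      ∀ x, w x ≠ 0 → ∃ p, e p = x := by
  classical
  have hinj : ∀ p q, e p = e q → p = q := fun p q h => by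
    by_contra hne
    exact lt_asymm (hlater p q (Ne.symm hne) (h ▸ (hunit q).ne_zero))
      (hlater q p hne (h ▸ (hunit p).ne_zero))
  let step : (p : P) → ((q : P) → rank q < rank p → ℤ) → ℤ := fun p F =>
    inc p (e p) * (c p - Finsupp.linearCombination ℤ
      (fun x => if h : ∃ q, e q = x ∧ rank q < rank p then F h.choose h.choose_spec.2 else 0)
      ((inc p).erase (e p)))
  let hwf : WellFounded fun p q : P => rank p < rank q := InvImage.wf rank wellFounded_lt
  let F : P → ℤ := hwf.fix step
  have hF : ∀ p, F p = step p fun q _ => F q := fun p => hwf.fix_eq step p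
  let w : E → ℤ := fun x => if h : ∃ q, e q = x then F h.choose else 0
  have hw : ∀ p, w (e p) = F p := fun p => by
    have h : ∃ q, e q = e p := ⟨p, rfl⟩
    simp only [w, dif_pos h]
    rw [hinj _ _ h.choose_spec]
  refine ⟨w, fun p => ?_, fun x hx => ?_⟩
  · have hrest : Finsupp.linearCombination ℤ
        (fun x => if h : ∃ q, e q = x ∧ rank q < rank p then F h.choose else 0)
        ((inc p).erase (e p)) = Finsupp.linearCombination ℤ w ((inc p).erase (e p)) := by
      simp only [Finsupp.linearCombination_apply]
      refine Finsupp.sum_congr fun x hx => ?_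
      rw [Finsupp.mem_support_iff] at hx
      have hxe : x ≠ e p := fun h => hx (by simp [h])
      rw [Finsupp.erase_ne hxe] at hx
      congr 1
      by_cases h : ∃ q, e q = x
      · obtain ⟨q, rfl⟩ := h
        have h' : ∃ q', e q' = e q ∧ rank q' < rank p :=
          ⟨q, rfl, hlater q p (fun h => hxe (h ▸ rfl)) hx⟩
        rw [hw, dif_pos h', hinj _ _ h'.choose_spec.1]
      · rw [dif_neg fun h' => h (h'.imp fun _ => And.left)]
        simp [w, dif_neg h]
    have hsplit := Finsupp.single_add_erase (e p) (inc p)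
    have hsq : inc p (e p) * inc p (e p) = 1 := by
      rcases Int.isUnit_iff.1 (hunit p) with h | h <;> simp [h]
    rw [← hsplit, map_add, Finsupp.linearCombination_single, hw, hF]
    simp only [step, hrest, smul_eq_mul]
    rw [← mul_assoc, hsq]
    ring
  · by_contra h
    exact hx (by simp [w, dif_neg h])

/-- A tiling of a planar region by rectangles: at every point of `M` each of the four quadrants
is locally occupied by exactly one rectangle. -/
structure RectTiling (A : Type*) (M : Set ℂ) where
  left : A → ℝ
  right : A → ℝ
  bot : A → ℝ
  top : A → ℝ
  left_lt_right : ∀ Q, left Q < right Q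
  bot_lt_top : ∀ Q, bot Q < top Q
  eq_of_overlap : ∀ Q Q', left Q < right Q' → left Q' < right Q → bot Q < top Q' →
    bot Q' < top Q → Q = Q'
  ne : M → A
  nw : M → A
  sw : M → A
  se : M → A
  ne_spec : ∀ p : M, (left (ne p) ≤ p.1.re ∧ p.1.re < right (ne p)) ∧
    bot (ne p) ≤ p.1.im ∧ p.1.im < top (ne p)
  nw_spec : ∀ p : M, (left (nw p) < p.1.re ∧ p.1.re ≤ right (nw p)) ∧
    bot (nw p) ≤ p.1.im ∧ p.1.im < top (nw p)
  sw_spec : ∀ p : M, (left (sw p) < p.1.re ∧ p.1.re ≤ right (sw p)) ∧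
    bot (sw p) < p.1.im ∧ p.1.im ≤ top (sw p)
  se_spec : ∀ p : M, (left (se p) ≤ p.1.re ∧ p.1.re < right (se p)) ∧
    bot (se p) < p.1.im ∧ p.1.im ≤ top (se p)

namespace RectTiling

variable {A : Type*} {M : Set ℂ} (T : RectTiling A M)

/-- The closed rectangle of a tile. -/
def box (Q : A) : Set ℂ :=
  {z | (T.left Q ≤ z.re ∧ z.re ≤ T.right Q) ∧ T.bot Q ≤ z.im ∧ z.im ≤ T.top Q}

/-- The lower left corner of the intersection of two tiles. -/
def lo (Q R : A) : ℂ := ⟨max (T.left Q) (T.left R), max (T.bot Q) (T.bot R)⟩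

/-- The upper right corner of the intersection of two tiles. -/
def hi (Q Q' : A) : ℂ := ⟨min (T.right Q) (T.right Q'), min (T.top Q) (T.top Q')⟩

theorem lo_comm (Q Q' : A) : T.lo Q Q' = T.lo Q' Q := by
  simp [lo, max_comm]

theorem hi_comm (Q Q' : A) : T.hi Q Q' = T.hi Q' Q := by
  simp [hi, min_comm]

variable {T}

theorem ne_eq {Q : A} {p : M} (h : (T.left Q ≤ p.1.re ∧ p.1.re < T.right Q) ∧
    T.bot Q ≤ p.1.im ∧ p.1.im < T.top Q) : T.ne p = Q := by
  have := T.ne_spec p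
  apply T.eq_of_overlap <;> linarith

theorem nw_eq {Q : A} {p : M} (h : (T.left Q < p.1.re ∧ p.1.re ≤ T.right Q) ∧
    T.bot Q ≤ p.1.im ∧ p.1.im < T.top Q) : T.nw p = Q := by
  have := T.nw_spec p
  apply T.eq_of_overlap <;> linarith

theorem sw_eq {Q : A} {p : M} (h : (T.left Q < p.1.re ∧ p.1.re ≤ T.right Q) ∧
    T.bot Q < p.1.im ∧ p.1.im ≤ T.top Q) : T.sw p = Q := by
  have := T.sw_spec p
  apply T.eq_of_overlap <;> linarith

theorem se_eq {Q : A} {p : M} (h : (T.left Q ≤ p.1.re ∧ p.1.re < T.right Q) ∧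
    T.bot Q < p.1.im ∧ p.1.im ≤ T.top Q) : T.se p = Q := by
  have := T.se_spec p
  apply T.eq_of_overlap <;> linarith

theorem mem_quadrants {Q : A} {p : M} (h : p.1 ∈ T.box Q) :
    Q = T.ne p ∨ Q = T.nw p ∨ Q = T.sw p ∨ Q = T.se p := by
  obtain ⟨⟨h1, h2⟩, h3, h4⟩ := h
  have hlr := T.left_lt_right Q
  have hbt := T.bot_lt_top Q
  rcases h2.lt_or_eq with h2 | h2 <;> rcases h4.lt_or_eq with h4 | h4
  · exact Or.inl (ne_eq ⟨⟨h1, h2⟩, h3, h4⟩).symm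
  · exact Or.inr (Or.inr (Or.inr (se_eq ⟨⟨h1, h2⟩, by linarith, h4.le⟩).symm))
  · exact Or.inr (Or.inl (nw_eq ⟨⟨by linarith, h2.le⟩, h3, h4⟩).symm)
  · exact Or.inr (Or.inr (Or.inl (sw_eq ⟨⟨by linarith, h2.le⟩, by linarith, h4.le⟩).symm))

theorem ne_mem (p : M) : p.1 ∈ T.box (T.ne p) := by
  have := T.ne_spec p
  exact ⟨⟨this.1.1, this.1.2.le⟩, this.2.1, this.2.2.le⟩

theorem lo_le_of_mem {Q Q' : A} {z : ℂ} (h : z ∈ T.box Q) (h' : z ∈ T.box Q') :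
    (T.lo Q Q').re ≤ z.re ∧ (T.lo Q Q').im ≤ z.im :=
  ⟨max_le h.1.1 h'.1.1, max_le h.2.1 h'.2.1⟩

theorem le_hi_of_mem {Q Q' : A} {z : ℂ} (h : z ∈ T.box Q) (h' : z ∈ T.box Q') :
    z.re ≤ (T.hi Q Q').re ∧ z.im ≤ (T.hi Q Q').im :=
  ⟨le_min h.1.2 h'.1.2, le_min h.2.2 h'.2.2⟩

theorem ne_eq_nw_or {p : M} : T.ne p = T.nw p ∨
    (T.left (T.ne p) = p.1.re ∧ T.right (T.nw p) = p.1.re) := by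
  have h1 := T.ne_spec p
  have h2 := T.nw_spec p
  rcases h1.1.1.lt_or_eq with h | h
  · exact Or.inl (nw_eq ⟨⟨h, h1.1.2.le⟩, h1.2⟩).symm
  rcases h2.1.2.lt_or_eq with h' | h'
  · exact Or.inl (ne_eq ⟨⟨h2.1.1.le, h'⟩, h2.2⟩)
  exact Or.inr ⟨h, h'.symm⟩

theorem se_eq_sw_or {p : M} : T.se p = T.sw p ∨
    (T.left (T.se p) = p.1.re ∧ T.right (T.sw p) = p.1.re) := by
  have h1 := T.se_spec p
  have h2 := T.sw_spec p
  rcases h1.1.1.lt_or_eq with h | h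
  · exact Or.inl (sw_eq ⟨⟨h, h1.1.2.le⟩, h1.2⟩).symm
  rcases h2.1.2.lt_or_eq with h' | h'
  · exact Or.inl (se_eq ⟨⟨h2.1.1.le, h'⟩, h2.2⟩)
  exact Or.inr ⟨h, h'.symm⟩

theorem ne_eq_se_or {p : M} : T.ne p = T.se p ∨
    (T.bot (T.ne p) = p.1.im ∧ T.top (T.se p) = p.1.im) := by
  have h1 := T.ne_spec p
  have h2 := T.se_spec p
  rcases h1.2.1.lt_or_eq with h | h
  · exact Or.inl (se_eq ⟨h1.1, h, h1.2.2.le⟩).symm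
  rcases h2.2.2.lt_or_eq with h' | h'
  · exact Or.inl (ne_eq ⟨h2.1, h2.2.1.le, h'⟩)
  exact Or.inr ⟨h, h'.symm⟩

theorem nw_eq_sw_or {p : M} : T.nw p = T.sw p ∨
    (T.bot (T.nw p) = p.1.im ∧ T.top (T.sw p) = p.1.im) := by
  have h1 := T.nw_spec p
  have h2 := T.sw_spec p
  rcases h1.2.1.lt_or_eq with h | h
  · exact Or.inl (sw_eq ⟨h1.1, h, h1.2.2.le⟩).symm
  rcases h2.2.2.lt_or_eq with h' | h'
  · exact Or.inl (nw_eq ⟨h2.1, h2.2.1.le, h'⟩)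
  exact Or.inr ⟨h, h'.symm⟩

/-- Diagonally opposite tiles at `p` are also adjacent there, or meet in a single point. -/
theorem ne_sw_cases (p : M) : T.ne p = T.nw p ∨ T.ne p = T.se p ∨ T.nw p = T.sw p ∨
    T.se p = T.sw p ∨ T.lo (T.ne p) (T.sw p) = T.hi (T.ne p) (T.sw p) := by
  rcases ne_eq_nw_or (T := T) (p := p) with h | h1
  · exact Or.inl h
  rcases ne_eq_se_or (T := T) (p := p) with h | h2
  · exact Or.inr (Or.inl h)
  rcases nw_eq_sw_or (T := T) (p := p) with h | h3
  · exact Or.inr (Or.inr (Or.inl h))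
  rcases se_eq_sw_or (T := T) (p := p) with h | h4
  · exact Or.inr (Or.inr (Or.inr (Or.inl h)))
  have h5 := T.ne_spec p
  have h6 := T.sw_spec p
  refine Or.inr (Or.inr (Or.inr (Or.inr (Complex.ext ?_ ?_)))) <;>
    simp only [lo, hi]
  · rw [max_eq_left (by linarith), min_eq_right (by linarith)]; linarith
  · rw [max_eq_left (by linarith), min_eq_right (by linarith)]; linarith

theorem nw_se_cases (p : M) : T.ne p = T.nw p ∨ T.ne p = T.se p ∨ T.nw p = T.sw p ∨
    T.se p = T.sw p ∨ T.lo (T.nw p) (T.se p) = T.hi (T.nw p) (T.se p) := by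
  rcases ne_eq_nw_or (T := T) (p := p) with h | h1
  · exact Or.inl h
  rcases ne_eq_se_or (T := T) (p := p) with h | h2
  · exact Or.inr (Or.inl h)
  rcases nw_eq_sw_or (T := T) (p := p) with h | h3
  · exact Or.inr (Or.inr (Or.inl h))
  rcases se_eq_sw_or (T := T) (p := p) with h | h4
  · exact Or.inr (Or.inr (Or.inr (Or.inl h)))
  have h5 := T.nw_spec p
  have h6 := T.se_spec p
  refine Or.inr (Or.inr (Or.inr (Or.inr (Complex.ext ?_ ?_)))) <;>
    simp only [lo, hi]
  · rw [max_eq_right (by linarith), min_eq_left (by linarith)]; linarith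
  · rw [max_eq_left (by linarith), min_eq_right (by linarith)]; linarith

theorem all_eq_of_ne_eq_sw {p : M} (h : T.ne p = T.sw p) :
    T.ne p = T.nw p ∧ T.se p = T.sw p := by
  have h1 := T.ne_spec p
  have h2 := T.sw_spec p
  rw [← h] at h2 ⊢
  exact ⟨(nw_eq ⟨h2.1, h1.2⟩).symm, se_eq ⟨h1.1, h2.2⟩⟩

theorem all_eq_of_nw_eq_se {p : M} (h : T.nw p = T.se p) :
    T.ne p = T.nw p ∧ T.se p = T.sw p := by
  have h1 := T.nw_spec p
  have h2 := T.se_spec p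
  rw [← h] at h2 ⊢
  exact ⟨ne_eq ⟨h2.1, h1.2⟩, (sw_eq ⟨h1.1, h2.2⟩).symm⟩

variable (T)

/-- A point at which at least three tiles meet. -/
def IsNode (p : M) : Prop :=
  ¬(T.ne p = T.nw p ∧ T.se p = T.sw p) ∧ ¬(T.ne p = T.se p ∧ T.nw p = T.sw p)

/-- The tiles `Q`, `Q'` occupy neighbouring quadrants at `p`, in anticlockwise order. -/
def IncPos (p : M) (Q Q' : A) : Prop :=
  (Q = T.ne p ∧ Q' = T.nw p) ∨ (Q = T.nw p ∧ Q' = T.sw p) ∨ (Q = T.sw p ∧ Q' = T.se p) ∨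
    (Q = T.se p ∧ Q' = T.ne p)

/-- The tiles `Q`, `Q'` occupy neighbouring quadrants at `p`. -/
def Inc (p : M) (Q Q' : A) : Prop := T.IncPos p Q Q' ∨ T.IncPos p Q' Q

variable {T}

theorem Inc.symm {p : M} {Q Q' : A} (h : T.Inc p Q Q') : T.Inc p Q' Q := Or.symm h

theorem IncPos.eq_lo_or_hi {p : M} (hp : T.IsNode p) {Q Q' : A} (hne : Q ≠ Q')
    (h : T.IncPos p Q Q') : p.1 = T.lo Q Q' ∨ p.1 = T.hi Q Q' := by
  have a := T.ne_spec p
  have b := T.nw_spec p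
  have c := T.sw_spec p
  have d := T.se_spec p
  rcases h with ⟨rfl, rfl⟩ | ⟨rfl, rfl⟩ | ⟨rfl, rfl⟩ | ⟨rfl, rfl⟩
  · have h1 := ne_eq_nw_or.resolve_left hne
    refine Or.inl (Complex.ext ?_ ?_) <;> simp only [lo]
    · rw [max_eq_left (by linarith)]; linarith
    · refine le_antisymm ?_ (max_le (by linarith) (by linarith))
      by_contra! hlt
      rw [max_lt_iff] at hlt
      exact hp.2 ⟨(se_eq ⟨a.1, hlt.1, a.2.2.le⟩).symm, (sw_eq ⟨b.1, hlt.2, b.2.2.le⟩).symm⟩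
  · have h1 := nw_eq_sw_or.resolve_left hne
    refine Or.inr (Complex.ext ?_ ?_) <;> simp only [hi]
    · refine le_antisymm (le_min (by linarith) (by linarith)) ?_
      by_contra! hlt
      rw [lt_min_iff] at hlt
      exact hp.1 ⟨ne_eq ⟨⟨b.1.1.le, hlt.1⟩, b.2⟩, se_eq ⟨⟨c.1.1.le, hlt.2⟩, c.2⟩⟩
    · rw [min_eq_right (by linarith)]; linarith
  · have h1 := se_eq_sw_or.resolve_left hne.symm
    refine Or.inr (Complex.ext ?_ ?_) <;> simp only [hi]
    · rw [min_eq_left (by linarith)]; linarith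
    · refine le_antisymm (le_min (by linarith) (by linarith)) ?_
      by_contra! hlt
      rw [lt_min_iff] at hlt
      exact hp.2 ⟨ne_eq ⟨d.1, d.2.1.le, hlt.2⟩, nw_eq ⟨c.1, c.2.1.le, hlt.1⟩⟩
  · have h1 := ne_eq_se_or.resolve_left hne.symm
    refine Or.inl (Complex.ext ?_ ?_) <;> simp only [lo]
    · refine le_antisymm ?_ (max_le (by linarith) (by linarith))
      by_contra! hlt
      rw [max_lt_iff] at hlt
      exact hp.1 ⟨(nw_eq ⟨⟨hlt.2, a.1.2.le⟩, a.2⟩).symm, (sw_eq ⟨⟨hlt.1, d.1.2.le⟩, d.2⟩).symm⟩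
    · rw [max_eq_right (by linarith)]; linarith

theorem Inc.eq_lo_or_hi {p : M} (hp : T.IsNode p) {Q Q' : A} (hne : Q ≠ Q')
    (h : T.Inc p Q Q') : p.1 = T.lo Q Q' ∨ p.1 = T.hi Q Q' := by
  rcases h with h | h
  · exact h.eq_lo_or_hi hp hne
  · rw [lo_comm, hi_comm]
    exact h.eq_lo_or_hi hp hne.symm

theorem Inc.eq_or_eq {p q s : M} (hp : T.IsNode p) (hq : T.IsNode q) (hs : T.IsNode s)
    (hpq : p ≠ q) {Q Q' : A} (hne : Q ≠ Q') (hpi : T.Inc p Q Q') (hqi : T.Inc q Q Q')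
    (hsi : T.Inc s Q Q') : s = p ∨ s = q := by
  have hpq' : p.1 ≠ q.1 := fun h => hpq (Subtype.ext h)
  simp only [Subtype.ext_iff]
  rcases hpi.eq_lo_or_hi hp hne with h1 | h1 <;> rcases hqi.eq_lo_or_hi hq hne with h2 | h2 <;>
    rcases hsi.eq_lo_or_hi hs hne with h3 | h3 <;> rw [h1, h2, h3] <;> simp_all

theorem IsNode.exists_inc {p : M} (hp : T.IsNode p) : ∃ Q Q', Q ≠ Q' ∧ T.Inc p Q Q' := by
  by_cases h : T.ne p = T.nw p
  · exact ⟨_, _, fun h' => hp.1 ⟨h, h'.symm⟩, Or.inl (Or.inr (Or.inr (Or.inl ⟨rfl, rfl⟩)))⟩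
  · exact ⟨_, _, h, Or.inl (Or.inl ⟨rfl, rfl⟩)⟩

/-- From every node an edge of the tiling leads upwards or to the right. -/
theorem IsNode.exists_next (hM : ∀ Q, ∀ z ∈ T.box Q, 0 < z.im → z ∈ M) (hpos : ∀ z ∈ M, 0 < z.im)
    {p : M} (hp : T.IsNode p) : ∃ q : M, T.IsNode q ∧
      (p.1.im < q.1.im ∨ p.1.im = q.1.im ∧ p.1.re < q.1.re) ∧
      ∃ Q Q', Q ≠ Q' ∧ T.Inc p Q Q' ∧ T.Inc q Q Q' := by
  have a := T.ne_spec p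
  have b := T.nw_spec p
  have d := T.se_spec p
  have hpp := hpos p.1 p.2
  by_cases hab : T.ne p = T.nw p
  · have hda : T.ne p ≠ T.se p := fun h => hp.1 ⟨hab, by
      rw [← hab] at b
      rw [← h] at d ⊢
      exact (sw_eq ⟨b.1, d.2⟩).symm⟩
    have hlt : p.1.re < min (T.right (T.ne p)) (T.right (T.se p)) := lt_min a.1.2 d.1.2
    have hle1 := min_le_left (T.right (T.ne p)) (T.right (T.se p))
    have hle2 := min_le_right (T.right (T.ne p)) (T.right (T.se p))
    have hq : (⟨min (T.right (T.ne p)) (T.right (T.se p)), p.1.im⟩ : ℂ) ∈ M :=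
      hM (T.ne p) _ ⟨⟨by simp only; linarith, hle1⟩, a.2.1, a.2.2.le⟩ hpp
    have hnw : T.nw ⟨_, hq⟩ = T.ne p := nw_eq ⟨⟨a.1.1.trans_lt hlt, hle1⟩, a.2⟩
    have hsw : T.sw ⟨_, hq⟩ = T.se p := sw_eq ⟨⟨d.1.1.trans_lt hlt, hle2⟩, d.2⟩
    refine ⟨⟨_, hq⟩, ⟨?_, ?_⟩, Or.inr ⟨rfl, hlt⟩, T.ne p, T.se p, hda,
      Or.inr (Or.inr (Or.inr (Or.inr ⟨rfl, rfl⟩))), Or.inl (Or.inr (Or.inl ⟨hnw.symm, hsw.symm⟩))⟩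
    · rintro ⟨h2, h3⟩
      have h4 := (T.ne_spec ⟨_, hq⟩).1.2
      have h5 := (T.se_spec ⟨_, hq⟩).1.2
      rw [h2, hnw] at h4
      rw [h3, hsw] at h5
      exact lt_irrefl _ (lt_min h4 h5)
    · rintro ⟨-, h3⟩
      rw [hnw, hsw] at h3
      exact hda h3
  · have hlt : p.1.im < min (T.top (T.ne p)) (T.top (T.nw p)) := lt_min a.2.2 b.2.2
    have hle1 := min_le_left (T.top (T.ne p)) (T.top (T.nw p))
    have hle2 := min_le_right (T.top (T.ne p)) (T.top (T.nw p))
    have hq : (⟨p.1.re, min (T.top (T.ne p)) (T.top (T.nw p))⟩ : ℂ) ∈ M :=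
      hM (T.ne p) _ ⟨⟨a.1.1, a.1.2.le⟩, by simp only; linarith, hle1⟩ (hpp.trans hlt)
    have hse : T.se ⟨_, hq⟩ = T.ne p := se_eq ⟨a.1, a.2.1.trans_lt hlt, hle1⟩
    have hsw : T.sw ⟨_, hq⟩ = T.nw p := sw_eq ⟨b.1, b.2.1.trans_lt hlt, hle2⟩
    refine ⟨⟨_, hq⟩, ⟨?_, ?_⟩, Or.inl hlt, T.ne p, T.nw p, hab,
      Or.inl (Or.inl ⟨rfl, rfl⟩), Or.inr (Or.inr (Or.inr (Or.inl ⟨hsw.symm, hse.symm⟩)))⟩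
    · rintro ⟨-, h3⟩
      rw [hse, hsw] at h3
      exact hab h3
    · rintro ⟨h2, h3⟩
      have h4 := (T.ne_spec ⟨_, hq⟩).2.2
      have h5 := (T.nw_spec ⟨_, hq⟩).2.2
      rw [h2, hse] at h4
      rw [h3, hsw] at h5
      exact lt_irrefl _ (lt_min h4 h5)

variable (T)

/-- The graph of nodes and edges of the tiling. -/
def nodeGraph : SimpleGraph {p : M // T.IsNode p} where
  Adj p q := p ≠ q ∧ ∃ Q Q', Q ≠ Q' ∧ T.Inc p.1 Q Q' ∧ T.Inc q.1 Q Q'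
  symm := ⟨fun _ _ ⟨h, Q, Q', hne, hp, hq⟩ => ⟨h.symm, Q, Q', hne, hq, hp⟩⟩
  loopless := ⟨fun _ h => h.1 rfl⟩

theorem countable_nodes [Countable A] : Countable {p : M // T.IsNode p} := by
  have hc : ((range fun x : A × A => T.lo x.1 x.2) ∪ range fun x : A × A => T.hi x.1 x.2).Countable :=
    (countable_range _).union (countable_range _)
  have := hc.to_subtype
  have hmem : ∀ p : {p : M // T.IsNode p}, p.1.1 ∈
      (range fun x : A × A => T.lo x.1 x.2) ∪ range fun x : A × A => T.hi x.1 x.2 := fun p => by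
    obtain ⟨Q, Q', hne, h⟩ := p.2.exists_inc
    rcases h.eq_lo_or_hi p.2 hne with h | h
    · exact Or.inl ⟨(Q, Q'), h.symm⟩
    · exact Or.inr ⟨(Q, Q'), h.symm⟩
  exact Function.Injective.countable (f := fun p => (⟨p.1.1, hmem p⟩ : ↥(_ ∪ _ : Set ℂ)))
    fun p q h => Subtype.ext (Subtype.ext (Subtype.mk.inj h))

theorem finite_neighborSet (p : {p : M // T.IsNode p}) : (T.nodeGraph.neighborSet p).Finite := by
  let S : Set A := {T.ne p.1, T.nw p.1, T.sw p.1, T.se p.1}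
  have hS : (S ×ˢ S).Finite := (toFinite S).prod (toFinite S)
  have hfin := (hS.image fun x : A × A => T.lo x.1 x.2).union
    (hS.image fun x : A × A => T.hi x.1 x.2)
  refine (hfin.preimage (f := fun q : {p : M // T.IsNode p} => q.1.1)
    fun q _ q' _ h => Subtype.ext (Subtype.ext h)).subset ?_
  rintro q ⟨-, Q, Q', hne, hp, hq⟩
  have hQ : (Q, Q') ∈ S ×ˢ S := by
    simp only [S, mem_prod, mem_insert_iff, mem_singleton_iff]
    rcases hp with (h | h | h | h) | (h | h | h | h) <;> simp [h.1, h.2]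
  rcases hq.eq_lo_or_hi q.2 hne with h | h
  · exact Or.inl ⟨_, hQ, h.symm⟩
  · exact Or.inr ⟨_, hQ, h.symm⟩

theorem infinite_component (hM : ∀ Q, ∀ z ∈ T.box Q, 0 < z.im → z ∈ M)
    (hpos : ∀ z ∈ M, 0 < z.im) (p : {p : M // T.IsNode p}) :
    {q | T.nodeGraph.Reachable p q}.Infinite := by
  have hnext : ∀ p : {p : M // T.IsNode p}, ∃ q, T.nodeGraph.Adj p q ∧
      toLex (p.1.1.im, p.1.1.re) < toLex (q.1.1.im, q.1.1.re) := fun p => by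
    obtain ⟨q, hq, hlt, hinc⟩ := p.2.exists_next hM hpos
    have hlt' : toLex (p.1.1.im, p.1.1.re) < toLex (q.1.im, q.1.re) :=
      Prod.Lex.toLex_lt_toLex.2 hlt
    refine ⟨⟨q, hq⟩, ⟨?_, hinc⟩, hlt'⟩
    rintro rfl
    exact lt_irrefl _ hlt'
  choose next hadj hlt using hnext
  have hmono : StrictMono fun k : ℕ =>
      toLex ((next^[k] p).1.1.im, (next^[k] p).1.1.re) := by
    refine strictMono_nat_of_lt_succ fun k => ?_
    rw [Function.iterate_succ_apply']
    exact hlt _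
  have hinj : Function.Injective fun k : ℕ => next^[k] p := fun j k h =>
    hmono.injective (by simp only at h; simp only [h])
  refine (infinite_range_of_injective hinj).mono ?_
  rintro _ ⟨k, rfl⟩
  induction k with
  | zero => exact SimpleGraph.Reachable.refl _
  | succ k ih =>
    simp only [Function.iterate_succ_apply']
    exact SimpleGraph.Reachable.trans ih (hadj _).reachable

/-- The formal sum of the oriented pairs of neighbouring tiles around `p`. -/
noncomputable def cycle (p : M) : A × A →₀ ℤ :=
  let D (x y : A) : A × A →₀ ℤ := Finsupp.single (x, y) 1 - Finsupp.single (y, x) 1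
  D (T.ne p) (T.nw p) + D (T.nw p) (T.sw p) + D (T.sw p) (T.se p) + D (T.se p) (T.ne p)

variable {T}

theorem inc_of_cycle_ne_zero {p : M} {Q Q' : A} (h : T.cycle p (Q, Q') ≠ 0) : T.Inc p Q Q' := by
  classical
  by_contra hno
  apply h
  simp only [Inc, IncPos, not_or] at hno
  simp only [cycle, Finsupp.add_apply, Finsupp.sub_apply, Finsupp.single_apply, Prod.mk.injEq]
  grind

theorem isUnit_cycle {p : M} (hp : T.IsNode p) {Q Q' : A} (hne : Q ≠ Q') (h : T.Inc p Q Q') :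
    IsUnit (T.cycle p (Q, Q')) := by
  classical
  have h1 : T.ne p ≠ T.sw p := fun h => hp.1 (all_eq_of_ne_eq_sw h)
  have h2 : T.nw p ≠ T.se p := fun h => hp.1 (all_eq_of_nw_eq_se h)
  have h3 := hp.1
  have h4 := hp.2
  rw [Int.isUnit_iff]
  simp only [Inc, IncPos] at h
  simp only [cycle, Finsupp.add_apply, Finsupp.sub_apply, Finsupp.single_apply, Prod.mk.injEq]
  rcases h with (⟨rfl, rfl⟩ | ⟨rfl, rfl⟩ | ⟨rfl, rfl⟩ | ⟨rfl, rfl⟩) |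
    (⟨rfl, rfl⟩ | ⟨rfl, rfl⟩ | ⟨rfl, rfl⟩ | ⟨rfl, rfl⟩) <;> grind

theorem linearCombination_cycle (w : A × A → ℤ) (p : M) :
    Finsupp.linearCombination ℤ w (T.cycle p) =
      (w (T.ne p, T.nw p) - w (T.nw p, T.ne p)) + (w (T.nw p, T.sw p) - w (T.sw p, T.nw p)) +
      (w (T.sw p, T.se p) - w (T.se p, T.sw p)) + (w (T.se p, T.ne p) - w (T.ne p, T.se p)) := by
  simp [cycle]

variable (T)

/-- Prescribed circulations around the nodes of a tiling of a region in the upper half-plane are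
realized by an alternating function on pairs of tiles supported on edges joining two nodes. -/
theorem exists_circulation [Countable A] (hM : ∀ Q, ∀ z ∈ T.box Q, 0 < z.im → z ∈ M)
    (hpos : ∀ z ∈ M, 0 < z.im) (c : M → ℤ) :
    ∃ m : A → A → ℤ, (∀ Q Q', m Q Q' = -m Q' Q) ∧ (∀ Q Q', m Q Q' ≠ 0 → T.lo Q Q' ∈ M) ∧
      ∀ p, T.IsNode p → m (T.ne p) (T.nw p) + m (T.nw p) (T.sw p) + m (T.sw p) (T.se p) +
        m (T.se p) (T.ne p) = c p := by
  have := T.countable_nodes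
  obtain ⟨rank, hrank⟩ := T.nodeGraph.exists_rank_lt_adj T.finite_neighborSet
    (T.infinite_component hM hpos)
  choose s hs hlt using hrank
  choose hsne Q Q' hne hp hq using hs
  obtain ⟨w, hw, hsupp⟩ := exists_solution_of_pivot rank (fun p => T.cycle p.1)
    (fun p => (Q p, Q' p)) (fun p => isUnit_cycle p.2 (hne p) (hp p)) (fun p q hqp h => by
      have hinc := inc_of_cycle_ne_zero h
      have h1 : p.1 ≠ (s p).1 := fun h => hsne p (Subtype.ext h)
      rcases Inc.eq_or_eq p.2 (s p).2 q.2 h1 (hne p) (hp p) (hq p) hinc with h | h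
      · exact absurd (Subtype.ext h) hqp
      · rw [Subtype.ext h]
        exact hlt p) (fun p => c p.1)
  have hlo : ∀ R R', w (R, R') ≠ 0 → T.lo R R' ∈ M := fun R R' h => by
    obtain ⟨p, hpe⟩ := hsupp _ h
    simp only [Prod.mk.injEq] at hpe
    obtain ⟨rfl, rfl⟩ := hpe
    have h1 : p.1.1 ≠ (s p).1.1 := fun h => hsne p (Subtype.ext (Subtype.ext h))
    rcases (hp p).eq_lo_or_hi p.2 (hne p) with h2 | h2
    · exact h2 ▸ p.1.2
    rcases (hq p).eq_lo_or_hi (s p).2 (hne p) with h3 | h3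
    · exact h3 ▸ (s p).1.2
    exact absurd (h2.trans h3.symm) h1
  refine ⟨fun R R' => w (R, R') - w (R', R), fun R R' => by ring, fun R R' h => ?_,
    fun p hp => ?_⟩
  · by_cases h1 : w (R, R') = 0
    · rw [lo_comm]
      exact hlo _ _ fun h2 => h (by simp [h1, h2])
    · exact hlo _ _ h1
  · rw [← hw ⟨p, hp⟩, linearCombination_cycle]

/-- An alternating 2-cocycle on the tiles of a tiling of a region in the upper half-plane is a
coboundary, of a cochain vanishing on pairs of tiles which meet on the real axis. -/
theorem exists_coboundary [Countable A] (hM : ∀ Q, ∀ z ∈ T.box Q, 0 < z.im → z ∈ M)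
    (hpos : ∀ z ∈ M, 0 < z.im) (n : A → A → A → ℤ) (halt₁ : ∀ i j k, n i j k = -n j i k)
    (halt₂ : ∀ i j k, n i j k = -n i k j)
    (hcoc : ∀ i j k l, ∀ z ∈ M, z ∈ T.box i → z ∈ T.box j → z ∈ T.box k → z ∈ T.box l →
      n j k l - n i k l + n i j l - n i j k = 0) :
    ∃ m : A → A → ℤ, (∀ i j, m i j = -m j i) ∧
      (∀ i j z, z ∈ T.box i → z ∈ T.box j → z.im = 0 → m i j = 0) ∧
      ∀ i j k, ∀ z ∈ M, z ∈ T.box i → z ∈ T.box j → z ∈ T.box k →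
        n i j k = m j k - m i k + m i j := by
  classical
  have hz1 : ∀ i k, n i i k = 0 := fun i k => by have := halt₁ i i k; omega
  have hz2 : ∀ i k, n i k k = 0 := fun i k => by have := halt₂ i k k; omega
  have hz3 : ∀ i k, n i k i = 0 := fun i k => by have := halt₂ i k i; have := hz1 i k; omega
  obtain ⟨m₀, hm₀, hlo, hnode⟩ := T.exists_circulation hM hpos
    fun p => n (T.ne p) (T.nw p) (T.sw p) + n (T.ne p) (T.sw p) (T.se p)
  have hm₀z : ∀ i, m₀ i i = 0 := fun i => by have := hm₀ i i; omega
  have hE : ∀ p, m₀ (T.ne p) (T.nw p) + m₀ (T.nw p) (T.sw p) + m₀ (T.sw p) (T.se p) +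
      m₀ (T.se p) (T.ne p) =
        n (T.ne p) (T.nw p) (T.sw p) + n (T.ne p) (T.sw p) (T.se p) := fun p => by
    by_cases hp : T.IsNode p
    · exact hnode p hp
    · rw [IsNode, ← not_or, not_not] at hp
      rcases hp with ⟨h1, h2⟩ | ⟨h1, h2⟩
      · rw [h1, h2, hm₀z, hm₀z, hz1, hz2, hm₀ (T.nw p)]; ring
      · rw [h1, h2, hm₀z, hm₀z, hz2, hz3, hm₀ (T.sw p)]; ring
  let g : M → A → ℤ := fun p Q => if Q = T.ne p then 0 else if Q = T.nw p then
    m₀ (T.ne p) (T.nw p) else if Q = T.se p then m₀ (T.ne p) (T.se p) else if Q = T.sw p then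
    m₀ (T.ne p) (T.nw p) + m₀ (T.nw p) (T.sw p) - n (T.ne p) (T.nw p) (T.sw p) else 0
  have hga : ∀ p, g p (T.ne p) = 0 := fun p => by simp [g]
  have hgb : ∀ p, g p (T.nw p) = m₀ (T.ne p) (T.nw p) := fun p => by
    simp only [g]; grind
  have hgd : ∀ p, g p (T.se p) = m₀ (T.ne p) (T.se p) := fun p => by
    simp only [g]; grind
  have hgc : ∀ p, g p (T.sw p) =
      m₀ (T.ne p) (T.nw p) + m₀ (T.nw p) (T.sw p) - n (T.ne p) (T.nw p) (T.sw p) := fun p => by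
    have := hE p
    simp only [g]; grind
  let f : M → A → A → ℤ := fun p Q Q' => n (T.ne p) Q Q' + g p Q' - g p Q
  have hfalt : ∀ p Q Q', f p Q Q' = -f p Q' Q := fun p Q Q' => by
    have := halt₂ (T.ne p) Q Q'
    simp only [f]; omega
  have hfpos : ∀ p Q Q', T.IncPos p Q Q' → f p Q Q' = m₀ Q Q' := fun p Q Q' h => by
    have h1 := hE p
    have h2 := hm₀ (T.ne p) (T.se p)
    rcases h with ⟨rfl, rfl⟩ | ⟨rfl, rfl⟩ | ⟨rfl, rfl⟩ | ⟨rfl, rfl⟩ <;>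
      simp only [f, hga, hgb, hgc, hgd, hz1, hz3] <;> omega
  have hfinc : ∀ p Q Q', T.Inc p Q Q' → f p Q Q' = m₀ Q Q' := fun p Q Q' h => by
    rcases h with h | h
    · exact hfpos _ _ _ h
    · rw [hfalt, hfpos _ _ _ h, hm₀ Q]
  have hfself : ∀ p Q, f p Q Q = m₀ Q Q := fun p Q => by simp [f, hz2, hm₀z]
  let m : A → A → ℤ := fun Q Q' => if h : T.lo Q Q' ∈ M ∧ T.lo Q Q' = T.hi Q Q' then
    f ⟨_, h.1⟩ Q Q' else m₀ Q Q'
  have hmf : ∀ p : M, ∀ Q Q', p.1 ∈ T.box Q → p.1 ∈ T.box Q' → m Q Q' = f p Q Q' := by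
    intro p Q Q' hQ hQ'
    by_cases h : T.lo Q Q' = T.hi Q Q'
    · have h1 := lo_le_of_mem hQ hQ'
      have h2 := le_hi_of_mem hQ hQ'
      rw [← h] at h2
      have hp : T.lo Q Q' = p.1 :=
        Complex.ext (le_antisymm h1.1 h2.1) (le_antisymm h1.2 h2.2)
      have hp' : T.lo Q Q' ∈ M ∧ T.lo Q Q' = T.hi Q Q' := ⟨hp ▸ p.2, h⟩
      simp only [m, dif_pos hp']
      congr 1
      exact Subtype.ext hp
    · simp only [m, dif_neg fun h' : T.lo Q Q' ∈ M ∧ T.lo Q Q' = T.hi Q Q' => h h'.2]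
      have hac := ne_sw_cases (T := T) p
      have hbd := nw_se_cases (T := T) p
      have h' : T.lo Q' Q ≠ T.hi Q' Q := by rwa [lo_comm, hi_comm]
      by_cases hQQ : Q = Q'
      · rw [hQQ, hfself]
      symm
      apply hfinc
      simp only [Inc, IncPos]
      rcases mem_quadrants hQ with h1 | h1 | h1 | h1 <;>
        rcases mem_quadrants hQ' with h2 | h2 | h2 | h2 <;> subst h1 <;> subst h2 <;> grind
  refine ⟨m, fun Q Q' => ?_, fun Q Q' z hz hz' hz0 => ?_, fun i j k z hz hi hj hk => ?_⟩
  · by_cases h : T.lo Q Q' ∈ M ∧ T.lo Q Q' = T.hi Q Q'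
    · have h' : T.lo Q' Q ∈ M ∧ T.lo Q' Q = T.hi Q' Q := by rwa [lo_comm, hi_comm]
      simp only [m, dif_pos h, dif_pos h']
      rw [hfalt]
      simp only [T.lo_comm Q Q']
    · have h' : ¬(T.lo Q' Q ∈ M ∧ T.lo Q' Q = T.hi Q' Q) := by rwa [lo_comm, hi_comm]
      simp only [m, dif_neg h, dif_neg h', hm₀ Q Q']
  · have hM' : T.lo Q Q' ∉ M := fun h => by
      have := hpos _ h
      have := (lo_le_of_mem hz hz').2
      linarith
    simp only [m, dif_neg fun h : T.lo Q Q' ∈ M ∧ T.lo Q Q' = T.hi Q Q' => hM' h.1]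
    by_contra h
    exact hM' (hlo _ _ h)
  · rw [hmf ⟨z, hz⟩ j k hj hk, hmf ⟨z, hz⟩ i k hi hk, hmf ⟨z, hz⟩ i j hi hj]
    have := hcoc (T.ne ⟨z, hz⟩) i j k z hz (ne_mem ⟨z, hz⟩) hi hj hk
    simp only [f]
    omega

end RectTiling

/-- The closed dyadic square of side `2⁻ⁿ` with lower left corner `(i + j I) / 2ⁿ`. -/
def dyadicBox (n : ℕ) (i j : ℤ) : Set ℂ :=
  {z | ((i : ℝ) / 2 ^ n ≤ z.re ∧ z.re ≤ ((i : ℝ) + 1) / 2 ^ n) ∧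
    (j : ℝ) / 2 ^ n ≤ z.im ∧ z.im ≤ ((j : ℝ) + 1) / 2 ^ n}

theorem dist_le_of_mem_dyadicBox {n : ℕ} {i j : ℤ} {z w : ℂ} (hz : z ∈ dyadicBox n i j)
    (hw : w ∈ dyadicBox n i j) : dist w z ≤ 2 / 2 ^ n := by
  obtain ⟨⟨h1, h2⟩, h3, h4⟩ := hz
  obtain ⟨⟨h5, h6⟩, h7, h8⟩ := hw
  rw [add_div] at h2 h4 h6 h8
  have hre : |(w - z).re| ≤ 1 / 2 ^ n := by
    rw [Complex.sub_re, abs_le]; constructor <;> linarith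
  have him : |(w - z).im| ≤ 1 / 2 ^ n := by
    rw [Complex.sub_im, abs_le]; constructor <;> linarith
  rw [dist_eq_norm]
  refine (Complex.norm_le_abs_re_add_abs_im _).trans ((add_le_add hre him).trans (le_of_eq ?_))
  ring

theorem dyadicBox_subset_iff {n m : ℕ} {i j i' j' : ℤ} :
    dyadicBox n i j ⊆ dyadicBox m i' j' ↔
      ((i' : ℝ) / 2 ^ m ≤ i / 2 ^ n ∧ ((i : ℝ) + 1) / 2 ^ n ≤ (i' + 1) / 2 ^ m) ∧
      (j' : ℝ) / 2 ^ m ≤ j / 2 ^ n ∧ ((j : ℝ) + 1) / 2 ^ n ≤ (j' + 1) / 2 ^ m := by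
  have hle : ∀ k : ℤ, (k : ℝ) / 2 ^ n ≤ ((k : ℝ) + 1) / 2 ^ n := fun k => by
    gcongr; linarith
  constructor
  · intro h
    have h1 := @h ⟨(i : ℝ) / 2 ^ n, (j : ℝ) / 2 ^ n⟩ ⟨⟨le_rfl, hle i⟩, le_rfl, hle j⟩
    have h2 := @h ⟨((i : ℝ) + 1) / 2 ^ n, ((j : ℝ) + 1) / 2 ^ n⟩ ⟨⟨hle i, le_rfl⟩, hle j, le_rfl⟩
    exact ⟨⟨h1.1.1, h2.1.2⟩, h1.2.1, h2.2.2⟩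
  · rintro ⟨⟨h1, h2⟩, h3, h4⟩ z ⟨⟨h5, h6⟩, h7, h8⟩
    exact ⟨⟨h1.trans h5, h6.trans h2⟩, h3.trans h7, h8.trans h4⟩

theorem floor_mem_dyadicBox (n : ℕ) (z : ℂ) :
    z ∈ dyadicBox n ⌊z.re * 2 ^ n⌋ ⌊z.im * 2 ^ n⌋ := by
  have h : (0 : ℝ) < 2 ^ n := by positivity
  refine ⟨⟨?_, ?_⟩, ?_, ?_⟩
  · rw [div_le_iff₀ h]; exact Int.floor_le _
  · rw [le_div_iff₀ h]; exact (Int.lt_floor_add_one _).le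
  · rw [div_le_iff₀ h]; exact Int.floor_le _
  · rw [le_div_iff₀ h]; exact (Int.lt_floor_add_one _).le

/-- Dyadic intervals with overlapping interiors are nested. -/
theorem dyadic_nested {m n : ℕ} (hmn : m ≤ n) {i i' : ℤ}
    (h1 : (i : ℝ) / 2 ^ n < ((i' : ℝ) + 1) / 2 ^ m) (h2 : (i' : ℝ) / 2 ^ m < ((i : ℝ) + 1) / 2 ^ n) :
    (i' : ℝ) / 2 ^ m ≤ i / 2 ^ n ∧ ((i : ℝ) + 1) / 2 ^ n ≤ (i' + 1) / 2 ^ m := by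
  obtain ⟨k, rfl⟩ := Nat.exists_eq_add_of_le hmn
  have hm : (0 : ℝ) < 2 ^ m := by positivity
  have hk : (0 : ℝ) < 2 ^ k := by positivity
  have key : ∀ x : ℝ, x / 2 ^ m = x * 2 ^ k / 2 ^ (m + k) := fun x => by
    rw [pow_add]; field_simp
  have hmk : (0 : ℝ) < 2 ^ (m + k) := by positivity
  rw [key, div_lt_div_iff_of_pos_right hmk] at h1 h2
  rw [key, key, div_le_div_iff_of_pos_right hmk, div_le_div_iff_of_pos_right hmk]
  have h1' : i < (i' + 1) * 2 ^ k := by exact_mod_cast h1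
  have h2' : i' * 2 ^ k < i + 1 := by exact_mod_cast h2
  exact ⟨by exact_mod_cast Int.lt_add_one_iff.1 h2', by exact_mod_cast Int.add_one_le_iff.2 h1'⟩

section DyadicTiles

variable {ι : Type*} (U : ι → Set ℂ)

/-- The dyadic square is contained in a member of the covering. -/
def Admissible (n : ℕ) (i j : ℤ) : Prop := ∃ k, dyadicBox n i j ⊆ U k

/-- The maximal admissible dyadic squares in the closed upper half-plane. -/
def IsTile (x : ℕ × ℤ × ℤ) : Prop :=
  0 ≤ x.2.2 ∧ Admissible U x.1 x.2.1 x.2.2 ∧ ∀ m < x.1, ∀ i j,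
    dyadicBox x.1 x.2.1 x.2.2 ⊆ dyadicBox m i j → ¬Admissible U m i j

variable {U}

theorem exists_isTile_mem (hU : ∀ k, IsOpen (U k)) {z : ℂ} {k : ι} (hz : z ∈ U k)
    (him : 0 ≤ z.im) : ∃ x, IsTile U x ∧ z ∈ dyadicBox x.1 x.2.1 x.2.2 := by
  classical
  have hex : ∃ n : ℕ, Admissible U n ⌊z.re * 2 ^ n⌋ ⌊z.im * 2 ^ n⌋ := by
    obtain ⟨δ, hδ, hball⟩ := Metric.isOpen_iff.1 (hU k) z hz
    obtain ⟨n, hn⟩ := exists_pow_lt_of_lt_one (show 0 < δ / 2 by positivity)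
      (show (1 / 2 : ℝ) < 1 by norm_num)
    refine ⟨n, k, fun w hw => hball ?_⟩
    refine (dist_le_of_mem_dyadicBox (floor_mem_dyadicBox n z) hw).trans_lt ?_
    rw [one_div, inv_pow] at hn
    rw [div_eq_mul_inv]
    linarith
  let n := Nat.find hex
  refine ⟨(n, ⌊z.re * 2 ^ n⌋, ⌊z.im * 2 ^ n⌋), ⟨Int.floor_nonneg.2 (by positivity),
    Nat.find_spec hex, fun m hm i j hsub hadm => Nat.find_min hex hm ?_⟩, floor_mem_dyadicBox n z⟩
  have hn : (0 : ℝ) < 2 ^ n := by positivity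
  have hm' : (0 : ℝ) < 2 ^ m := by positivity
  obtain ⟨⟨h1, h2⟩, h3, h4⟩ := dyadicBox_subset_iff.1 hsub
  have floor_eq : ∀ (x : ℝ) (i : ℤ), (i : ℝ) / 2 ^ m ≤ ⌊x * 2 ^ n⌋ / 2 ^ n →
      ((⌊x * 2 ^ n⌋ : ℝ) + 1) / 2 ^ n ≤ (i + 1) / 2 ^ m → ⌊x * 2 ^ m⌋ = i := fun x i h h' => by
    rw [Int.floor_eq_iff, ← div_le_iff₀ hm', ← lt_div_iff₀ hm']
    refine ⟨h.trans ?_, lt_of_lt_of_le ?_ h'⟩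
    · rw [div_le_iff₀ hn]; exact Int.floor_le _
    · rw [lt_div_iff₀ hn]; exact Int.lt_floor_add_one _
  rwa [floor_eq _ _ h1 h2, floor_eq _ _ h3 h4]

theorem IsTile.eq_of_overlap {x y : ℕ × ℤ × ℤ} (hx : IsTile U x) (hy : IsTile U y)
    (h1 : (x.2.1 : ℝ) / 2 ^ x.1 < ((y.2.1 : ℝ) + 1) / 2 ^ y.1)
    (h2 : (y.2.1 : ℝ) / 2 ^ y.1 < ((x.2.1 : ℝ) + 1) / 2 ^ x.1)
    (h3 : (x.2.2 : ℝ) / 2 ^ x.1 < ((y.2.2 : ℝ) + 1) / 2 ^ y.1)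
    (h4 : (y.2.2 : ℝ) / 2 ^ y.1 < ((x.2.2 : ℝ) + 1) / 2 ^ x.1) : x = y := by
  wlog hle : y.1 ≤ x.1 generalizing x y
  · exact (this hy hx h2 h1 h4 h3 (le_of_not_ge hle)).symm
  obtain ⟨n, i, j⟩ := x
  obtain ⟨m, i', j'⟩ := y
  simp only at h1 h2 h3 h4 hle
  rcases hle.lt_or_eq with hlt | rfl
  · exact absurd hy.2.1 (hx.2.2 m hlt i' j'
      (dyadicBox_subset_iff.2 ⟨dyadic_nested hle h1 h2, dyadic_nested hle h3 h4⟩))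
  · have hm : (0 : ℝ) < 2 ^ m := by positivity
    rw [div_lt_div_iff_of_pos_right hm] at h1 h2 h3 h4
    have h1' : i < i' + 1 := by exact_mod_cast h1
    have h2' : i' < i + 1 := by exact_mod_cast h2
    have h3' : j < j' + 1 := by exact_mod_cast h3
    have h4' : j' < j + 1 := by exact_mod_cast h4
    simp only [Prod.mk.injEq, true_and]
    omega

theorem exists_parent (n : ℕ) (i j : ℤ) :
    ∃ i' j', dyadicBox (n + 1) i j ⊆ dyadicBox n i' j' := by
  have key : ∀ i : ℤ, ((i / 2 : ℤ) : ℝ) / 2 ^ n ≤ i / 2 ^ (n + 1) ∧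
      ((i : ℝ) + 1) / 2 ^ (n + 1) ≤ ((i / 2 : ℤ) + 1) / 2 ^ n := fun i => by
    have hn : (0 : ℝ) < 2 ^ (n + 1) := by positivity
    have h : ∀ x : ℝ, x / 2 ^ n = x * 2 / 2 ^ (n + 1) := fun x => by
      rw [pow_succ]; field_simp
    rw [h, h, div_le_div_iff_of_pos_right hn, div_le_div_iff_of_pos_right hn]
    have h1 : i / 2 * 2 ≤ i := by omega
    have h2 : i + 1 ≤ (i / 2 + 1) * 2 := by omega
    exact ⟨by exact_mod_cast h1, by exact_mod_cast h2⟩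
  exact ⟨i / 2, j / 2, dyadicBox_subset_iff.2 ⟨key i, key j⟩⟩

theorem finite_isTile_inter_ball (hU : ∀ k, IsOpen (U k)) {z : ℂ} {k : ι} (hz : z ∈ U k) :
    ∃ δ > 0, {x | IsTile U x ∧
      (dyadicBox x.1 x.2.1 x.2.2 ∩ Metric.ball z δ).Nonempty}.Finite := by
  obtain ⟨δ, hδ, hball⟩ := Metric.isOpen_iff.1 (hU k) z hz
  obtain ⟨N, hN⟩ := exists_pow_lt_of_lt_one (show 0 < δ / 4 by positivity)
    (show (1 / 2 : ℝ) < 1 by norm_num)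
  obtain ⟨C, hC⟩ := exists_nat_gt ((‖z‖ + δ / 2) * 2 ^ N + 1)
  have hfin := (finite_Iic N).prod ((finite_Icc (-(C : ℤ)) C).prod (finite_Icc (-(C : ℤ)) C))
  refine ⟨δ / 2, by positivity, hfin.subset ?_⟩
  rintro ⟨n, i, j⟩ ⟨hx, w, hw, hwz⟩
  rw [Metric.mem_ball] at hwz
  have hn : n ≤ N := by
    by_contra! hlt
    obtain ⟨n, rfl⟩ : ∃ k, n = k + 1 := ⟨n - 1, by omega⟩
    obtain ⟨i', j', hsub⟩ := exists_parent n i j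
    refine hx.2.2 n (Nat.lt_succ_self n) i' j' hsub ⟨k, fun v hv => hball ?_⟩
    have h1 := dist_le_of_mem_dyadicBox (hsub hw) hv
    have h2 : (2 : ℝ) / 2 ^ n ≤ 2 * (1 / 2) ^ N := by
      rw [div_eq_mul_inv, one_div, inv_pow]
      gcongr
      · norm_num
      · omega
    have h3 := dist_triangle v w z
    rw [Metric.mem_ball]
    linarith
  have hwnorm : ‖w‖ ≤ ‖z‖ + δ / 2 := by
    have := norm_le_norm_add_norm_sub' w z
    rw [dist_eq_norm] at hwz
    linarith
  have hpow : (0 : ℝ) < 2 ^ n := by positivity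
  have hle : (2 : ℝ) ^ n ≤ 2 ^ N := pow_le_pow_right₀ (by norm_num) hn
  have key : ∀ (i : ℤ) (t : ℝ), |t| ≤ ‖w‖ → (i : ℝ) / 2 ^ n ≤ t → t ≤ ((i : ℝ) + 1) / 2 ^ n →
      i ∈ Icc (-(C : ℤ)) C := fun i t ht h1 h2 => by
    rw [div_le_iff₀ hpow] at h1
    rw [le_div_iff₀ hpow] at h2
    have h3 : |t * 2 ^ n| ≤ (‖z‖ + δ / 2) * 2 ^ N := by
      rw [abs_mul, abs_of_pos hpow]
      exact mul_le_mul (ht.trans hwnorm) hle hpow.le (by positivity)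
    rw [abs_le] at h3
    have h4 : -(C : ℝ) ≤ i := by linarith
    have h5 : (i : ℝ) ≤ C := by linarith
    exact ⟨by exact_mod_cast h4, by exact_mod_cast h5⟩
  exact ⟨hn, key i w.re (Complex.abs_re_le_norm w) hw.1.1 hw.1.2,
    key j w.im (Complex.abs_im_le_norm w) hw.2.1 hw.2.2⟩

theorem isClosed_dyadicBox (n : ℕ) (i j : ℤ) : IsClosed (dyadicBox n i j) :=
  ((isClosed_le continuous_const Complex.continuous_re).inter
    (isClosed_le Complex.continuous_re continuous_const)).inter
    ((isClosed_le continuous_const Complex.continuous_im).inter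
      (isClosed_le Complex.continuous_im continuous_const))

/-- A small ball around a point meets only those tiles which contain the point, and stays in
prescribed neighbourhoods of these tiles. -/
theorem exists_ball_isTile (hU : ∀ k, IsOpen (U k)) (r : {x // IsTile U x} → ι)
    (hr : ∀ x, dyadicBox x.1.1 x.1.2.1 x.1.2.2 ⊆ U (r x)) {z : ℂ} {k : ι} (hz : z ∈ U k) :
    ∃ ε > 0, (0 < z.im → ε ≤ z.im) ∧ ∀ x : {x // IsTile U x},
      (dyadicBox x.1.1 x.1.2.1 x.1.2.2 ∩ Metric.ball z ε).Nonempty →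
        z ∈ dyadicBox x.1.1 x.1.2.1 x.1.2.2 ∧ Metric.ball z ε ⊆ U (r x) := by
  obtain ⟨δ, hδ, hfin⟩ := finite_isTile_inter_ball hU hz
  have hfin' := hfin.preimage (f := (Subtype.val : {x // IsTile U x} → _))
    Subtype.val_injective.injOn
  have hsmall : ∀ η > (0 : ℝ), ∀ᶠ ε in nhdsWithin (0 : ℝ) (Ioi 0), ε ≤ η := fun η hη =>
    nhdsWithin_le_nhds (eventually_le_nhds hη)
  have hev : ∀ x : {x // IsTile U x}, ∀ᶠ ε in nhdsWithin (0 : ℝ) (Ioi 0),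
      (dyadicBox x.1.1 x.1.2.1 x.1.2.2 ∩ Metric.ball z ε).Nonempty →
        z ∈ dyadicBox x.1.1 x.1.2.1 x.1.2.2 ∧ Metric.ball z ε ⊆ U (r x) := fun x => by
    by_cases hx : z ∈ dyadicBox x.1.1 x.1.2.1 x.1.2.2
    · obtain ⟨η, hη, hsub⟩ := Metric.isOpen_iff.1 (hU (r x)) z (hr x hx)
      filter_upwards [hsmall η hη] with ε hε _
      exact ⟨hx, (Metric.ball_subset_ball hε).trans hsub⟩
    · obtain ⟨η, hη, hsub⟩ := Metric.isOpen_iff.1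
        (isClosed_dyadicBox x.1.1 x.1.2.1 x.1.2.2).isOpen_compl z hx
      filter_upwards [hsmall η hη] with ε hε
      rintro ⟨w, hw, hwz⟩
      exact absurd hw (hsub (Metric.ball_subset_ball hε hwz))
  have him : ∀ᶠ ε in nhdsWithin (0 : ℝ) (Ioi 0), 0 < z.im → ε ≤ z.im := by
    by_cases h : 0 < z.im
    · filter_upwards [hsmall _ h] with ε hε _ using hε
    · exact Filter.Eventually.of_forall fun ε h' => absurd h' h
  obtain ⟨ε, hε, hεδ, hεim, hpos⟩ := (((Filter.eventually_all_finite hfin').2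
    fun x _ => hev x).and ((hsmall δ hδ).and (him.and self_mem_nhdsWithin))).exists
  refine ⟨ε, hpos, hεim, fun x hx => hε x ?_ hx⟩
  exact ⟨x.2, hx.mono (inter_subset_inter_right _ (Metric.ball_subset_ball hεδ))⟩

/-- At a point of the open upper half-plane covered by `U`, every quadrant is occupied by a tile. -/
theorem exists_isTile_quadrant (hU : ∀ k, IsOpen (U k)) (r : {x // IsTile U x} → ι)
    (hr : ∀ x, dyadicBox x.1.1 x.1.2.1 x.1.2.2 ⊆ U (r x)) {z : ℂ} {k : ι} (hz : z ∈ U k)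
    (him : 0 < z.im) (s t : ℝ) : ∃ x : {x // IsTile U x},
      z ∈ dyadicBox x.1.1 x.1.2.1 x.1.2.2 ∧ ∃ δ > 0,
        (⟨z.re + δ * s, z.im + δ * t⟩ : ℂ) ∈ dyadicBox x.1.1 x.1.2.1 x.1.2.2 := by
  obtain ⟨ε, hε, -, hball⟩ := exists_ball_isTile hU r hr hz
  have hlim : Filter.Tendsto (fun δ : ℝ => z + δ * (⟨s, t⟩ : ℂ)) (nhdsWithin 0 (Ioi 0))
      (nhds z) := by
    have hcont : Continuous fun δ : ℝ => z + δ * (⟨s, t⟩ : ℂ) := by fun_prop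
    simpa using (hcont.tendsto 0).mono_left nhdsWithin_le_nhds
  have h1 := hlim.eventually (Metric.ball_mem_nhds z hε)
  have h2 := hlim.eventually ((hU k).mem_nhds hz)
  have h3 := hlim.eventually ((isOpen_lt continuous_const Complex.continuous_im).mem_nhds him)
  obtain ⟨δ, h1, h2, h3, hδ⟩ := (h1.and (h2.and (h3.and self_mem_nhdsWithin))).exists
  obtain ⟨x, hx, hmem⟩ := exists_isTile_mem hU h2 (le_of_lt h3)
  refine ⟨⟨x, hx⟩, (hball ⟨x, hx⟩ ⟨_, hmem, h1⟩).1, δ, hδ, ?_⟩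
  convert hmem using 1
  apply Complex.ext <;> simp

/-- The maximal admissible dyadic squares tile the part of the upper half-plane covered by `U`. -/
theorem exists_dyadic_rectTiling (hU : ∀ k, IsOpen (U k)) (r : {x // IsTile U x} → ι)
    (hr : ∀ x, dyadicBox x.1.1 x.1.2.1 x.1.2.2 ⊆ U (r x)) :
    ∃ T : RectTiling {x // IsTile U x} {z : ℂ | 0 < z.im ∧ ∃ k, z ∈ U k},
      ∀ x, T.box x = dyadicBox x.1.1 x.1.2.1 x.1.2.2 := by
  have hq := fun (p : {z : ℂ | 0 < z.im ∧ ∃ k, z ∈ U k}) (s t : ℝ) =>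
    exists_isTile_quadrant hU r hr p.2.2.choose_spec p.2.1 s t
  choose q hmem δ hδ hmem' using hq
  have hlt : ∀ (k : ℤ) (n : ℕ), (k : ℝ) / 2 ^ n < ((k : ℝ) + 1) / 2 ^ n := fun k n => by
    gcongr; linarith
  refine ⟨{
    left := fun x => (x.1.2.1 : ℝ) / 2 ^ x.1.1
    right := fun x => ((x.1.2.1 : ℝ) + 1) / 2 ^ x.1.1
    bot := fun x => (x.1.2.2 : ℝ) / 2 ^ x.1.1
    top := fun x => ((x.1.2.2 : ℝ) + 1) / 2 ^ x.1.1
    left_lt_right := fun x => hlt _ _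
    bot_lt_top := fun x => hlt _ _
    eq_of_overlap := fun x y h1 h2 h3 h4 =>
      Subtype.ext (IsTile.eq_of_overlap x.2 y.2 h1 h2 h3 h4)
    ne := fun p => q p 1 1
    nw := fun p => q p (-1) 1
    sw := fun p => q p (-1) (-1)
    se := fun p => q p 1 (-1)
    ne_spec := fun p => ?_
    nw_spec := fun p => ?_
    sw_spec := fun p => ?_
    se_spec := fun p => ?_ }, fun x => rfl⟩
  · have h := hmem p 1 1
    have h' := hmem' p 1 1
    have hd := hδ p 1 1
    simp only [dyadicBox, mem_ofPred_eq] at h h'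
    exact ⟨⟨by linarith, by linarith⟩, by linarith, by linarith⟩
  · have h := hmem p (-1) 1
    have h' := hmem' p (-1) 1
    have hd := hδ p (-1) 1
    simp only [dyadicBox, mem_ofPred_eq] at h h'
    exact ⟨⟨by linarith, by linarith⟩, by linarith, by linarith⟩
  · have h := hmem p (-1) (-1)
    have h' := hmem' p (-1) (-1)
    have hd := hδ p (-1) (-1)
    simp only [dyadicBox, mem_ofPred_eq] at h h'
    exact ⟨⟨by linarith, by linarith⟩, by linarith, by linarith⟩
  · have h := hmem p 1 (-1)
    have h' := hmem' p 1 (-1)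
    have hd := hδ p 1 (-1)
    simp only [dyadicBox, mem_ofPred_eq] at h h'
    exact ⟨⟨by linarith, by linarith⟩, by linarith, by linarith⟩

end DyadicTiles

/-- Vanishing of the antisymmetric second cohomology group `H²ₐ(D, ℤ)` of a symmetric
planar open set, in Čech form: every antisymmetric integer-valued 2-cocycle on a
symmetric open covering of `D` becomes a coboundary on a symmetric open refinement. -/
theorem antisymmetric_H2_vanishes (D : Set ℂ)
    (hopen : IsOpen D) (hsym : (starRingEnd ℂ) '' D = D)
    {ι : Type} (U : ι → Set ℂ)
    (hUopen : ∀ i, IsOpen (U i)) (hUsym : ∀ i, (starRingEnd ℂ) '' U i = U i)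
    (hUcover : D ⊆ ⋃ i, U i)
    (n : ι → ι → ι → ℤ)
    (halt₁ : ∀ i j k, n i j k = - n j i k)
    (halt₂ : ∀ i j k, n i j k = - n i k j)
    (hreal : ∀ i j k, (U i ∩ U j ∩ U k ∩ {z : ℂ | z.im = 0}).Nonempty → n i j k = 0)
    (hcoc : ∀ i j k l, (U i ∩ U j ∩ U k ∩ U l ∩ {z : ℂ | 0 < z.im}).Nonempty →
      n j k l - n i k l + n i j l - n i j k = 0) :
    ∃ (A : Type) (V : A → Set ℂ) (r : A → ι) (m : A → A → ℤ),
      (∀ a, IsOpen (V a)) ∧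
      (∀ a, (starRingEnd ℂ) '' V a = V a) ∧
      D ⊆ ⋃ a, V a ∧
      (∀ a, V a ⊆ U (r a)) ∧
      (∀ a b, m a b = - m b a) ∧
      (∀ a b, (V a ∩ V b ∩ {z : ℂ | z.im = 0}).Nonempty → m a b = 0) ∧
      (∀ a b c, (V a ∩ V b ∩ V c ∩ {z : ℂ | 0 < z.im}).Nonempty →
        n (r a) (r b) (r c) = m b c - m a c + m a b) := by
  obtain ⟨r, hr⟩ : ∃ r : {x // IsTile U x} → ι,
      ∀ x, dyadicBox x.1.1 x.1.2.1 x.1.2.2 ⊆ U (r x) :=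
    ⟨fun x => x.2.2.1.choose, fun x => x.2.2.1.choose_spec⟩
  obtain ⟨T, hT⟩ := exists_dyadic_rectTiling hUopen r hr
  simp only [← hT] at hr
  have hTU : ∀ x, ∀ z ∈ T.box x, z ∈ U (r x) := fun x z hz => hr x hz
  have hTim : ∀ x, ∀ z ∈ T.box x, 0 ≤ z.im := fun x z hz => by
    rw [hT] at hz
    have : (0 : ℝ) ≤ x.1.2.2 := by exact_mod_cast x.2.1
    exact le_trans (by positivity) hz.2.1
  obtain ⟨m, hmalt, hmreal, hmcob⟩ := T.exists_coboundary
    (fun x z hz him => ⟨him, r x, hTU x z hz⟩) (fun z hz => hz.1)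
    (fun x y w => n (r x) (r y) (r w)) (fun _ _ _ => halt₁ _ _ _) (fun _ _ _ => halt₂ _ _ _)
    (fun i j k l z hz hi hj hk hl => hcoc _ _ _ _
      ⟨z, ⟨⟨⟨hTU i z hi, hTU j z hj⟩, hTU k z hk⟩, hTU l z hl⟩, hz.1⟩)
  have hball : ∀ z : ℂ, ∃ ε > 0, (∃ k, z ∈ U k) → (0 < z.im → ε ≤ z.im) ∧
      ∀ x, (T.box x ∩ Metric.ball z ε).Nonempty →
        z ∈ T.box x ∧ Metric.ball z ε ⊆ U (r x) := fun z => by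
    by_cases hz : ∃ k, z ∈ U k
    · obtain ⟨ε, hε, h⟩ := exists_ball_isTile hUopen r (fun x => hT x ▸ hr x) hz.choose_spec
      simp only [← hT] at h
      exact ⟨ε, hε, fun _ => h⟩
    · exact ⟨1, one_pos, fun h => absurd h hz⟩
  choose ε hε hεball using hball
  have hεim : ∀ x, ∀ y ∈ T.box x, 0 < y.im → ε y ≤ y.im := fun x y hy =>
    (hεball y ⟨_, hTU x y hy⟩).1
  have hεU : ∀ x, ∀ y ∈ T.box x, Metric.ball y (ε y) ⊆ U (r x) := fun x y hy =>
    ((hεball y ⟨_, hTU x y hy⟩).2 x ⟨y, hy, Metric.mem_ball_self (hε y)⟩).2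
  have hshare : ∀ x x' : {x // IsTile U x}, ∀ z y y', y ∈ T.box x → y' ∈ T.box x' →
      dist z y < ε y / 2 → dist z y' < ε y' / 2 → ε y' ≤ ε y → y ∈ T.box x' := by
    intro x x' z y y' hy hy' h h' hle
    refine ((hεball y ⟨_, hTU x y hy⟩).2 x' ⟨y', hy', ?_⟩).1
    have := dist_triangle_left y' y z
    rw [Metric.mem_ball]
    linarith
  let V : {x // IsTile U x} → Set ℂ := fun x =>
    {z | ∃ y ∈ T.box x, dist z y < ε y / 2 ∨ dist (starRingEnd ℂ z) y < ε y / 2}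
  have hVconj : ∀ x z, z ∈ V x → starRingEnd ℂ z ∈ V x := by
    rintro x z ⟨y, hy, h⟩
    exact ⟨y, hy, by rw [Complex.conj_conj]; exact h.symm⟩
  have hVup : ∀ x z, 0 ≤ z.im → z ∈ V x →
      ∃ y ∈ T.box x, dist z y < ε y / 2 ∧ (z.im = 0 → y.im = 0) := by
    rintro x z hz ⟨y, hy, h⟩
    have hdist : ∀ w : ℂ, dist w y < ε y / 2 → 0 < y.im → 0 < w.im := fun w hw him => by
      have h1 := hεim x y hy him
      have h2 := Complex.abs_im_le_norm (w - y)
      rw [← dist_eq_norm, Complex.sub_im] at h2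
      have h3 := abs_le.1 h2
      linarith
    have h0 := hTim x y hy
    rcases h0.eq_or_lt with him | him
    · refine ⟨y, hy, ?_, fun _ => him.symm⟩
      rcases h with h | h
      · exact h
      · rwa [← Complex.dist_conj_conj, Complex.conj_conj, Complex.conj_eq_iff_im.2 him.symm] at h
    · rcases h with h | h
      · exact ⟨y, hy, h, fun hz0 => absurd (hdist z h him) (by simp [hz0])⟩
      · have := hdist _ h him
        rw [Complex.conj_im] at this
        linarith
  refine ⟨{x // IsTile U x}, V, r, m, fun x => ?_, fun x => ?_, fun z hz => ?_, fun x z hz => ?_,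
    hmalt, ?_, ?_⟩
  · have hVeq : V x = ⋃ y ∈ T.box x, (Metric.ball y (ε y / 2) ∪
        (starRingEnd ℂ) ⁻¹' Metric.ball y (ε y / 2)) := by
      ext z
      simp [V]
    rw [hVeq]
    exact isOpen_biUnion fun y _ => Metric.isOpen_ball.union
      (Metric.isOpen_ball.preimage Complex.continuous_conj)
  · refine Subset.antisymm ?_ fun z hz => ⟨_, hVconj x z hz, Complex.conj_conj z⟩
    rintro _ ⟨z, hz, rfl⟩
    exact hVconj x z hz
  · obtain ⟨k, hk⟩ := mem_iUnion.1 (hUcover hz)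
    have hself : ∀ w ∈ U k, 0 ≤ w.im → ∃ x, w ∈ V x := fun w hw him => by
      obtain ⟨x, hx, hmem⟩ := exists_isTile_mem hUopen hw him
      exact ⟨⟨x, hx⟩, w, by rwa [hT], Or.inl (by simpa using hε w)⟩
    rw [mem_iUnion]
    rcases le_total 0 z.im with him | him
    · exact hself z hk him
    · obtain ⟨x, hx⟩ := hself (starRingEnd ℂ z) (hUsym k ▸ mem_image_of_mem _ hk)
        (by rw [Complex.conj_im]; linarith)
      exact ⟨x, by simpa using hVconj x _ hx⟩
  · obtain ⟨y, hy, h⟩ := hz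
    have hsub : ∀ w, dist w y < ε y / 2 → w ∈ U (r x) := fun w hw =>
      hεU x y hy (Metric.mem_ball.2 (by have := hε y; linarith))
    rcases h with h | h
    · exact hsub z h
    · rw [← hUsym]
      exact ⟨_, hsub _ h, Complex.conj_conj z⟩
  · rintro x x' ⟨z, ⟨hx, hx'⟩, hz⟩
    obtain ⟨y, hy, hd, hy0⟩ := hVup x z (le_of_eq (Eq.symm hz)) hx
    obtain ⟨y', hy', hd', hy0'⟩ := hVup x' z (le_of_eq (Eq.symm hz)) hx'
    rcases le_total (ε y') (ε y) with hle | hle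
    · exact hmreal x x' y hy (hshare x x' z y y' hy hy' hd hd' hle) (hy0 hz)
    · exact hmreal x x' y' (hshare x' x z y' y hy' hy hd' hd hle) hy' (hy0' hz)
  · have hcommon : ∀ i j k y, y ∈ T.box i → y ∈ T.box j → y ∈ T.box k →
        n (r i) (r j) (r k) = m j k - m i k + m i j := fun i j k y hi hj hk => by
      rcases (hTim i y hi).eq_or_lt with him | him
      · rw [hmreal i j y hi hj him.symm, hmreal j k y hj hk him.symm,
          hmreal i k y hi hk him.symm, hreal _ _ _
            ⟨y, ⟨⟨hTU i y hi, hTU j y hj⟩, hTU k y hk⟩, him.symm⟩]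
        rfl
      · exact hmcob i j k y ⟨him, r i, hTU i y hi⟩ hi hj hk
    rintro i j k ⟨z, ⟨⟨hi, hj⟩, hk⟩, hz⟩
    obtain ⟨y₁, h₁, d₁, -⟩ := hVup i z (le_of_lt hz) hi
    obtain ⟨y₂, h₂, d₂, -⟩ := hVup j z (le_of_lt hz) hj
    obtain ⟨y₃, h₃, d₃, -⟩ := hVup k z (le_of_lt hz) hk
    have hmax : (ε y₂ ≤ ε y₁ ∧ ε y₃ ≤ ε y₁) ∨ (ε y₁ ≤ ε y₂ ∧ ε y₃ ≤ ε y₂) ∨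
        (ε y₁ ≤ ε y₃ ∧ ε y₂ ≤ ε y₃) := by grind
    rcases hmax with ⟨ha, hb⟩ | ⟨ha, hb⟩ | ⟨ha, hb⟩
    · exact hcommon i j k y₁ h₁ (hshare i j z y₁ y₂ h₁ h₂ d₁ d₂ ha)
        (hshare i k z y₁ y₃ h₁ h₃ d₁ d₃ hb)
    · exact hcommon i j k y₂ (hshare j i z y₂ y₁ h₂ h₁ d₂ d₁ ha) h₂
        (hshare j k z y₂ y₃ h₂ h₃ d₂ d₃ hb)
    · exact hcommon i j k y₃ (hshare k i z y₃ y₁ h₃ h₁ d₃ d₁ ha)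
        (hshare k j z y₃ y₂ h₃ h₂ d₃ d₂ hb) h₃
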